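/- arXiv:1903.02341 — 6 statements merged into one kernel-verified Lean document; each statement's English description precedes it below -/
import Mathlib

section
/- Let δ ∈ (0,1). For each n ≥ 1 let B_n : C(2π) → C(2π) be the Bernstein operator on [−π,π], (B_n f)(x) = Σ_{k=0}^n f(−π + 2πk/n)·binom(n,k)·(x+π)^k (π−x)^{n−k}/(2π)^n (well-defined on C(2π) since f(−π) = f(π)), and let F_n : C(2π) → C(2π) be a bounded linear operator satisfying ‖F_n(g) − g‖∞ ≤ (δ/(1−δ))·‖g − B_n(g)‖∞ for all g ∈ C(2π). Then the set ⋃_{n≥1} F_n(R(2π)) is dense in C(2π). -/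
/-!
A function in `C(2π)` is a continuous function on the circle `ℝ / 2πℤ`, and there the complex span
of the Fourier monomials is dense. Taking real parts maps that span into the trigonometric
polynomials, which are therefore dense in `C(2π)`; each of them is rational with denominator `1`.

The affine change of variable to `[0, 1]` turns the Bernstein operator on `[-π, π]` into the
classical one, so `B_n t → t` uniformly, and the hypothesis on the operators gives `F_n t → t` for
every fixed `t`. Pointwise convergence to the identity on a dense set is enough: each trigonometric
polynomial `t` is a limit of the points `F_n t`.
-/

open scoped Real

noncomputable section

abbrev Ipi : Set ℝ := Set.Icc (-Real.pi) Real.pi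

lemma negPi_mem_Ipi : -Real.pi ∈ Ipi := ⟨le_rfl, neg_le_self Real.pi_pos.le⟩
lemma pi_mem_Ipi : Real.pi ∈ Ipi := ⟨neg_le_self Real.pi_pos.le, le_rfl⟩

/-- The space `C(2π)` of continuous functions on `[-π, π]` with equal values at the
endpoints, as a submodule of `C([-π,π], ℝ)`. -/
def C2pi : Submodule ℝ C(Ipi, ℝ) where
  carrier := {f | f ⟨-Real.pi, negPi_mem_Ipi⟩ = f ⟨Real.pi, pi_mem_Ipi⟩}
  add_mem' := by
    intro f g hf hg
    simp only [Set.mem_setOf_eq, ContinuousMap.add_apply] at *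
    rw [hf, hg]
  zero_mem' := rfl
  smul_mem' := by
    intro c f hf
    simp only [Set.mem_setOf_eq, ContinuousMap.smul_apply] at *
    rw [hf]

def trigCos (k : ℕ) : C(Ipi, ℝ) := ⟨fun x => Real.cos (k * (x : ℝ)), by fun_prop⟩
def trigSin (k : ℕ) : C(Ipi, ℝ) := ⟨fun x => Real.sin (k * (x : ℝ)), by fun_prop⟩

/-- Trigonometric polynomials of degree at most `m`. -/
def TrigPoly (m : ℕ) : Submodule ℝ C(Ipi, ℝ) :=
  Submodule.span ℝ {f | ∃ k ≤ m, f = trigCos k ∨ f = trigSin k}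

/-- Rational trigonometric functions of type `(m, n)`. -/
def RatTrig (m n : ℕ) : Set C2pi :=
  {t | ∃ p ∈ TrigPoly m, ∃ q ∈ TrigPoly n, (∀ x, 0 < q x) ∧
    ∀ x, (t : C(Ipi, ℝ)) x = p x / q x}

/-- The set `R(2π)` of all rational trigonometric functions. -/
def RatTrigAll : Set C2pi := ⋃ (m : ℕ), ⋃ (n : ℕ), RatTrig m n


/-- The Bernstein polynomial of a function in `C(2π)` on the interval `[-π, π]`:
`(B_n f)(x) = Σ_{k=0}^n f(-π + 2πk/n) · binom(n,k) · (x+π)^k (π-x)^{n-k} / (2π)^n`.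
(For `1 ≤ n` and `k ≤ n` the node `-π + 2πk/n` lies in `[-π, π]`, so the clamping
`Set.projIcc` is the identity on the nodes.) -/
def bern2pi (n : ℕ) (f : C2pi) : C(Ipi, ℝ) :=
  ⟨fun x => ∑ k ∈ Finset.range (n + 1),
      (f : C(Ipi, ℝ))
          (Set.projIcc (-Real.pi) Real.pi (neg_le_self Real.pi_pos.le)
            (-Real.pi + 2 * Real.pi * (k : ℝ) / (n : ℝ))) *
        (n.choose k : ℝ) * ((x : ℝ) + Real.pi) ^ k * (Real.pi - (x : ℝ)) ^ (n - k) /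
        (2 * Real.pi) ^ n,
   by fun_prop⟩

open Filter Topology

lemma dense_iUnion_image_of_tendsto {ι X : Type*} [TopologicalSpace X] {l : Filter ι} [l.NeBot]
    {p : ι → Prop} (hp : ∀ᶠ i in l, p i) {A : Set X} (hA : Dense A) {F : ι → X → X}
    (hF : ∀ a ∈ A, Tendsto (fun i => F i a) l (𝓝 a)) :
    Dense (⋃ i, ⋃ (_ : p i), F i '' A) := by
  refine (hA.mono fun a ha => ?_).of_closure
  refine mem_closure_of_tendsto (hF a ha) (hp.mono fun i hi => ?_)
  exact Set.mem_iUnion₂.2 ⟨i, hi, a, ha, rfl⟩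

section Bernstein

lemma bernstein_iccHomeoI {a b : ℝ} (hab : a < b) {n k : ℕ} (hk : k ≤ n) (x : Set.Icc a b) :
    bernstein n k (iccHomeoI a b hab x) =
      n.choose k * (x - a) ^ k * (b - x) ^ (n - k) / (b - a) ^ n := by
  have hba : b - a ≠ 0 := (sub_pos.2 hab).ne'
  have one_sub : 1 - (x - a) / (b - a) = (b - x) / (b - a) := by
    field_simp
    ring
  have pow_split : (b - a) ^ n = (b - a) ^ k * (b - a) ^ (n - k) := by
    rw [← pow_add, Nat.add_sub_cancel' hk]
  rw [bernstein_apply, iccHomeoI_apply_coe, one_sub, div_pow, div_pow, pow_split]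
  ring

lemma iccHomeoI_symm_eq_projIcc {𝕜 : Type*} [Field 𝕜] [LinearOrder 𝕜] [IsStrictOrderedRing 𝕜]
    [TopologicalSpace 𝕜] [IsTopologicalRing 𝕜] {a b : 𝕜} (hab : a < b) (u : Set.Icc (0 : 𝕜) 1) :
    (iccHomeoI a b hab).symm u = Set.projIcc a b hab.le (a + (b - a) * u) := by
  have hu : a + (b - a) * (u : 𝕜) = (iccHomeoI a b hab).symm u := by
    rw [iccHomeoI_symm_apply_coe, add_comm]
  rw [hu, Set.projIcc_val]

variable {E : Type*} [AddCommGroup E] [TopologicalSpace E] [IsTopologicalAddGroup E] [Module ℝ E]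
  [ContinuousSMul ℝ E] {a b : ℝ}

/-- The `n`-th Bernstein approximation on `[a, b]`, obtained from the one on `[0, 1]` by the affine
change of variable. -/
def bernsteinIcc (hab : a < b) (n : ℕ) (f : C(Set.Icc a b, E)) : C(Set.Icc a b, E) :=
  (bernsteinApproximation n (f.comp (iccHomeoI a b hab).symm)).comp (iccHomeoI a b hab)

lemma bernsteinIcc_apply (hab : a < b) (n : ℕ) (f : C(Set.Icc a b, E)) (x : Set.Icc a b) :
    bernsteinIcc hab n f x = ∑ k ∈ Finset.range (n + 1),
      (n.choose k * (x - a) ^ k * (b - x) ^ (n - k) / (b - a) ^ n : ℝ) •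
        f (Set.projIcc a b hab.le (a + (b - a) * (k / n))) := by
  rw [Finset.sum_range]
  refine (bernsteinApproximation.apply n _ _).trans (Finset.sum_congr rfl fun k _ => ?_)
  rw [← bernstein_iccHomeoI hab k.is_le]
  exact congrArg (fun y => bernstein n k (iccHomeoI a b hab x) • f y)
    (iccHomeoI_symm_eq_projIcc hab (bernstein.z k))

lemma tendsto_bernsteinIcc [LocallyConvexSpace ℝ E] (hab : a < b) (f : C(Set.Icc a b, E)) :
    Tendsto (fun n => bernsteinIcc hab n f) atTop (𝓝 f) := by
  let φ : C(Set.Icc a b, unitInterval) := iccHomeoI a b hab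
  have hf : (f.comp (iccHomeoI a b hab).symm).comp φ = f := by
    ext x
    exact congrArg f ((iccHomeoI a b hab).symm_apply_apply x)
  have hlim := (bernsteinApproximation_uniform (f.comp (iccHomeoI a b hab).symm)).compCM
    (tendsto_const_nhds (x := φ))
  rwa [hf] at hlim

lemma bern2pi_eq_bernsteinIcc (n : ℕ) (f : C2pi) :
    bern2pi n f = bernsteinIcc (neg_lt_self Real.pi_pos) n (f : C(Ipi, ℝ)) := by
  ext x
  rw [bernsteinIcc_apply, bern2pi, ContinuousMap.coe_mk]
  refine Finset.sum_congr rfl fun k _ => ?_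
  rw [sub_neg_eq_add, sub_neg_eq_add, ← two_mul, smul_eq_mul, mul_div_assoc (2 * Real.pi)]
  ring

lemma tendsto_bern2pi (f : C2pi) :
    Tendsto (fun n => bern2pi n f) atTop (𝓝 (f : C(Ipi, ℝ))) := by
  simpa only [bern2pi_eq_bernsteinIcc] using tendsto_bernsteinIcc _ (f : C(Ipi, ℝ))

end Bernstein

section TrigonometricPolynomials

lemma trigPoly_mono : Monotone TrigPoly := fun _ _ h =>
  Submodule.span_mono fun _ ⟨k, hk, hf⟩ => ⟨k, hk.trans h, hf⟩

lemma trigCos_mem_trigPoly (k : ℕ) : trigCos k ∈ TrigPoly k :=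
  Submodule.subset_span ⟨k, le_rfl, Or.inl rfl⟩

lemma trigSin_mem_trigPoly (k : ℕ) : trigSin k ∈ TrigPoly k :=
  Submodule.subset_span ⟨k, le_rfl, Or.inr rfl⟩

/-- The trigonometric polynomials of arbitrary degree, as a subspace of `C(2π)`. -/
def trigPolyAll : Submodule ℝ C2pi := (⨆ m, TrigPoly m).comap C2pi.subtype

lemma mem_trigPolyAll {t : C2pi} : t ∈ trigPolyAll ↔ ∃ m, (t : C(Ipi, ℝ)) ∈ TrigPoly m :=
  Submodule.mem_iSup_of_chain ⟨TrigPoly, trigPoly_mono⟩ _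

lemma trigPolyAll_subset_ratTrigAll : (trigPolyAll : Set C2pi) ⊆ RatTrigAll := by
  intro t ht
  obtain ⟨m, hm⟩ := mem_trigPolyAll.1 ht
  have trigCos_zero (x : Ipi) : trigCos 0 x = 1 := by simp [trigCos]
  refine Set.mem_iUnion₂.2 ⟨m, 0, t, hm, trigCos 0, trigCos_mem_trigPoly 0,
    fun x => ?_, fun x => ?_⟩
  · rw [trigCos_zero]
    exact one_pos
  · rw [trigCos_zero, div_one]

end TrigonometricPolynomials

section Circle

lemma exists_continuousMap_addCircle_of_endpoints_eq {𝕜 E : Type*} [AddCommGroup 𝕜]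
    [LinearOrder 𝕜] [IsOrderedAddMonoid 𝕜] [Archimedean 𝕜] [TopologicalSpace 𝕜] [OrderTopology 𝕜]
    [TopologicalSpace E] {p a b : 𝕜} [Fact (0 < p)] (hab : b = a + p) (f : C(Set.Icc a b, E))
    (ha : a ∈ Set.Icc a b) (hb : b ∈ Set.Icc a b) (hf : f ⟨a, ha⟩ = f ⟨b, hb⟩) :
    ∃ g : C(AddCircle p, E), ∀ x : Set.Icc a b, g ((x : 𝕜) : AddCircle p) = f x := by
  subst hab
  have hresp : ∀ x y, AddCircle.EndpointIdent p a x y → f x = f y := by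
    rintro _ _ ⟨⟩
    exact hf
  let e := AddCircle.homeoIccQuot p a
  have hcont := (continuous_quot_lift hresp f.continuous).comp e.continuous
  refine ⟨⟨Quot.lift f hresp ∘ e, hcont⟩, fun x => ?_⟩
  exact congrArg (Quot.lift f hresp) (e.apply_symm_apply (Quot.mk _ x))

instance fact_two_pi_pos : Fact (0 < 2 * Real.pi) := ⟨Real.two_pi_pos⟩

lemma coe_neg_pi_eq_coe_pi :
    ((-Real.pi : ℝ) : AddCircle (2 * Real.pi)) = (Real.pi : AddCircle (2 * Real.pi)) := by
  rw [← AddCircle.coe_add_period, two_mul, neg_add_cancel_left]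

/-- The map `C(ℝ / 2πℤ, ℂ) → C(2π)` taking the real part and restricting to `[-π, π]`. It carries
the density of the Fourier monomials over to `C(2π)`. -/
def circleRe : C(AddCircle (2 * Real.pi), ℂ) →L[ℝ] C2pi where
  toFun g := ⟨⟨fun x => (g ((x : ℝ) : AddCircle (2 * Real.pi))).re, by fun_prop⟩,
    congrArg (fun y => (g y).re) coe_neg_pi_eq_coe_pi⟩
  map_add' _ _ := rfl
  map_smul' r g := by
    ext x
    exact Complex.re_ofReal_mul r _
  cont := by
    have hcoe : Continuous fun x : Ipi => ((x : ℝ) : AddCircle (2 * Real.pi)) := by fun_prop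
    exact ((ContinuousMap.continuous_postcomp ⟨Complex.re, Complex.continuous_re⟩).comp
      (ContinuousMap.continuous_precomp ⟨_, hcoe⟩)).subtype_mk _

lemma circleRe_apply (g : C(AddCircle (2 * Real.pi), ℂ)) (x : Ipi) :
    (circleRe g : C(Ipi, ℝ)) x = (g ((x : ℝ) : AddCircle (2 * Real.pi))).re :=
  rfl

lemma circleRe_surjective : Function.Surjective circleRe := by
  intro f
  let fℂ : C(Ipi, ℂ) := ⟨fun x => ((f : C(Ipi, ℝ)) x : ℂ), by fun_prop⟩
  obtain ⟨g, hg⟩ := exists_continuousMap_addCircle_of_endpoints_eq (p := 2 * Real.pi) (by ring) fℂ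
    negPi_mem_Ipi pi_mem_Ipi (congrArg Complex.ofReal f.2)
  refine ⟨g, Subtype.ext (ContinuousMap.ext fun x => ?_)⟩
  rw [circleRe_apply, hg]
  exact Complex.ofReal_re _

lemma re_mul_fourier_two_pi (c : ℂ) (k : ℤ) (x : ℝ) :
    (c * fourier k (x : AddCircle (2 * Real.pi))).re =
      c.re * Real.cos (k * x) - c.im * Real.sin (k * x) := by
  have fourier_eq_exp :
      fourier k (x : AddCircle (2 * Real.pi)) = Complex.exp ((k * x : ℝ) * Complex.I) := by
    have hpi : (Real.pi : ℂ) ≠ 0 := Complex.ofReal_ne_zero.2 Real.pi_ne_zero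
    rw [fourier_coe_apply]
    congr 1
    push_cast
    field_simp
  rw [fourier_eq_exp, Complex.mul_re, Complex.exp_ofReal_mul_I_re, Complex.exp_ofReal_mul_I_im]

lemma circleRe_smul_fourier_mem_trigPolyAll (c : ℂ) (k : ℤ) :
    circleRe (c • fourier k) ∈ trigPolyAll := by
  have circleRe_eq (x : Ipi) : (circleRe (c • fourier k) : C(Ipi, ℝ)) x =
      c.re * Real.cos (k * x) - c.im * Real.sin (k * x) := re_mul_fourier_two_pi c k x
  obtain ⟨n, hn⟩ := k.eq_nat_or_neg
  have hcos := (TrigPoly n).smul_mem c.re (trigCos_mem_trigPoly n)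
  have hsin := (TrigPoly n).smul_mem c.im (trigSin_mem_trigPoly n)
  refine mem_trigPolyAll.2 ⟨n, ?_⟩
  rcases hn with rfl | rfl
  · convert sub_mem hcos hsin using 1
    ext x
    rw [circleRe_eq]
    rfl
  · convert add_mem hcos hsin using 1
    ext x
    rw [circleRe_eq, Int.cast_neg, neg_mul, Real.cos_neg, Real.sin_neg, mul_neg,
      sub_neg_eq_add]
    rfl

lemma circleRe_mem_trigPolyAll {g : C(AddCircle (2 * Real.pi), ℂ)}
    (hg : g ∈ Submodule.span ℂ (Set.range (@fourier (2 * Real.pi)))) :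
    circleRe g ∈ trigPolyAll := by
  induction hg using Submodule.closure_induction with
  | zero => exact map_zero circleRe ▸ zero_mem _
  | add g h _ _ hg hh => exact map_add circleRe g h ▸ add_mem hg hh
  | smul_mem c g hg =>
    obtain ⟨k, rfl⟩ := hg
    exact circleRe_smul_fourier_mem_trigPolyAll c k

theorem dense_trigPolyAll : Dense (trigPolyAll : Set C2pi) := by
  have hspan : Dense (Submodule.span ℂ (Set.range (@fourier (2 * Real.pi))) :
      Set C(AddCircle (2 * Real.pi), ℂ)) :=
    Submodule.dense_iff_topologicalClosure_eq_top.2 span_fourier_closure_eq_top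
  refine (circleRe_surjective.denseRange.dense_image circleRe.continuous hspan).mono ?_
  exact Set.image_subset_iff.2 fun g hg => circleRe_mem_trigPolyAll hg

end Circle

lemma tendsto_of_norm_sub_le_bern2pi {C : ℝ} {u : ℕ → C2pi} {g : C2pi}
    (hu : ∀ᶠ n in atTop, ‖u n - g‖ ≤ C * ‖(g : C(Ipi, ℝ)) - bern2pi n g‖) :
    Tendsto u atTop (𝓝 g) := by
  have hB : Tendsto (fun n => C * ‖(g : C(Ipi, ℝ)) - bern2pi n g‖) atTop (𝓝 0) := by
    simpa using ((tendsto_bern2pi g).const_sub (g : C(Ipi, ℝ))).norm.const_mul C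
  exact tendsto_iff_norm_sub_tendsto_zero.2
    (squeeze_zero' (.of_forall fun _ => norm_nonneg _) hu hB)

theorem stmt2_general (C : ℝ) (F : ℕ → C2pi → C2pi)
    (hF : ∀ n, 1 ≤ n → ∀ g : C2pi, ‖F n g - g‖ ≤ C * ‖(g : C(Ipi, ℝ)) - bern2pi n g‖) :
    Dense (⋃ n, ⋃ (_ : 1 ≤ n), F n '' trigPolyAll) :=
  dense_iUnion_image_of_tendsto (eventually_ge_atTop 1) dense_trigPolyAll fun t _ =>
    tendsto_of_norm_sub_le_bern2pi ((eventually_ge_atTop 1).mono fun n hn => hF n hn t)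

theorem stmt2 (δ : ℝ) (hδ : δ ∈ Set.Ioo (0 : ℝ) 1)
    (F : ℕ → (C2pi →L[ℝ] C2pi))
    (hF : ∀ n, 1 ≤ n → ∀ g : C2pi,
      ‖F n g - g‖ ≤ δ / (1 - δ) * ‖(g : C(Ipi, ℝ)) - bern2pi n g‖) :
    Dense (⋃ n, ⋃ (_ : 1 ≤ n), (fun t => F n t) '' RatTrigAll) := by
  exact (stmt2_general (δ / (1 - δ)) (fun n => F n) hF).mono
    (Set.iUnion₂_mono fun n _ => Set.image_mono trigPolyAll_subset_ratTrigAll)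
end
end

section
/- Let I = [a,b] be a compact interval, let δ ∈ (0,1), c ≥ 0, and let F : C(I) → C(I) be a bounded linear operator satisfying ‖F(g) − g‖∞ ≤ (δ/(1−δ))·c·‖g‖∞ for all g ∈ C(I). Then for every f ∈ C(I) and all nonnegative integers m, n, dist(f, F(R_{mn}(I))) ≤ dist(f, R_{mn}(I)) + (δ·c/(1−δ))·(dist(f, R_{mn}(I)) + ‖f‖∞). -/
noncomputable section

/-- Rational functions of type `(m, n)` on the interval `[a, b]`: quotients `p/q` of real
polynomials with `deg p ≤ m`, `deg q ≤ n` and `q > 0` on `[a, b]`, viewed as elements of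
`C([a, b], ℝ)`. -/
def RatPoly (a b : ℝ) (m n : ℕ) : Set C(Set.Icc a b, ℝ) :=
  {t | ∃ p q : Polynomial ℝ, p.natDegree ≤ m ∧ q.natDegree ≤ n ∧
    (∀ x : Set.Icc a b, 0 < q.eval (x : ℝ)) ∧
    ∀ x : Set.Icc a b, t x = p.eval (x : ℝ) / q.eval (x : ℝ)}

/-!
An operator that moves each `t` by at most `K ‖t‖` satisfies
`‖f - F t‖ ≤ ‖f - t‖ + K ‖t‖ ≤ (1 + K) ‖f - t‖ + K ‖f‖`, an increasing affine function of
`‖f - t‖`, so the estimate survives taking the infimum over the approximants `t`.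
-/

theorem infDist_image_le_mul_infDist_add {X Y : Type*} [PseudoMetricSpace X]
    [PseudoMetricSpace Y] {s : Set X} (hs : s.Nonempty) {φ : X → Y} {x : X} {y : Y} {A B : ℝ}
    (hA : 0 ≤ A) (h : ∀ t ∈ s, dist y (φ t) ≤ A * dist x t + B) :
    Metric.infDist y (φ '' s) ≤ A * Metric.infDist x s + B := by
  have : Nonempty s := hs.to_subtype
  have hbdd : BddBelow (Set.range fun t : s => A * dist x t) :=
    ⟨0, Set.forall_mem_range.2 fun _ => mul_nonneg hA dist_nonneg⟩
  rw [Metric.infDist_eq_iInf (s := s), Real.mul_iInf_of_nonneg hA, ciInf_add hbdd]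
  exact le_ciInf fun t =>
    (Metric.infDist_le_dist_of_mem (Set.mem_image_of_mem φ t.2)).trans (h t t.2)

theorem dist_le_of_norm_sub_le_mul_norm {E : Type*} [SeminormedAddCommGroup E] {K : ℝ}
    (hK : 0 ≤ K) {t u : E} (h : ‖u - t‖ ≤ K * ‖t‖) (f : E) :
    dist f u ≤ (1 + K) * dist f t + K * ‖f‖ :=
  calc
    dist f u ≤ dist f t + dist t u := dist_triangle f t u
    _ ≤ dist f t + K * ‖t‖ := by
      rw [dist_comm t u, dist_eq_norm u t]
      gcongr
    _ ≤ dist f t + K * (‖f‖ + dist f t) := by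
      rw [dist_eq_norm]
      gcongr
      exact norm_le_norm_add_norm_sub f t
    _ = (1 + K) * dist f t + K * ‖f‖ := by ring

theorem ratPoly_nonempty (a b : ℝ) (m n : ℕ) : (RatPoly a b m n).Nonempty :=
  ⟨0, 0, 1, by simp, by simp, by simp, by simp⟩

theorem stmt9_general {E : Type*} [SeminormedAddCommGroup E] {S : Set E} (hS : S.Nonempty)
    {K : ℝ} (hK : 0 ≤ K) {F : E → E} (hF : ∀ t ∈ S, ‖F t - t‖ ≤ K * ‖t‖) (f : E) :
    Metric.infDist f (F '' S) ≤
      Metric.infDist f S + K * (Metric.infDist f S + ‖f‖) :=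
  calc
    Metric.infDist f (F '' S) ≤ (1 + K) * Metric.infDist f S + K * ‖f‖ :=
      infDist_image_le_mul_infDist_add hS (by positivity) fun t ht =>
        dist_le_of_norm_sub_le_mul_norm hK (hF t ht) f
    _ = Metric.infDist f S + K * (Metric.infDist f S + ‖f‖) := by ring

theorem stmt9 (a b : ℝ) (hab : a ≤ b) (δ c : ℝ) (hδ : δ ∈ Set.Ioo (0 : ℝ) 1) (hc : 0 ≤ c)
    (F : C(Set.Icc a b, ℝ) →L[ℝ] C(Set.Icc a b, ℝ))
    (hF : ∀ g : C(Set.Icc a b, ℝ), ‖F g - g‖ ≤ δ / (1 - δ) * c * ‖g‖)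
    (f : C(Set.Icc a b, ℝ)) (m n : ℕ) :
    Metric.infDist f ((fun t => F t) '' RatPoly a b m n) ≤
      Metric.infDist f (RatPoly a b m n) +
        δ * c / (1 - δ) * (Metric.infDist f (RatPoly a b m n) + ‖f‖) := by
  have hK : 0 ≤ δ * c / (1 - δ) := div_nonneg (mul_nonneg hδ.1.le hc) (sub_nonneg.2 hδ.2.le)
  exact stmt9_general (ratPoly_nonempty a b m n) hK
    (fun t _ => (hF t).trans_eq (by rw [mul_div_right_comm])) f
end
end

section
/- Let δ ∈ (0,1). For each n ≥ 1 let B_n : C([0,1]) → C([0,1]) be the n-th Bernstein operator, (B_n g)(x) = Σ_{k=0}^n g(k/n)·binom(n,k)·x^k (1−x)^{n−k}, and let F_n : C([0,1]) → C([0,1]) be a bounded linear operator satisfying ‖F_n(g) − g‖∞ ≤ (δ/(1−δ))·‖g − B_n(g)‖∞ for all g ∈ C([0,1]). Fix nonnegative integers l, m. Then for every f ∈ C([0,1]), dist(f, ⋃_{n≥1} F_n(R_{l,m}([0,1]))) ≤ dist(f, R_{l,m}([0,1])). -/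
/-! If the operators `F n` converge pointwise to the identity on `S`, then `S` lies in the closure
of `⋃ n, F n '' S`, and the distance to a set equals the distance to its closure. For Bernstein
fractal operators the error `F n g - g` is controlled by the Bernstein error, which tends to zero
by Bernstein's theorem. -/

open unitInterval

noncomputable section

/-- Rational functions of type `(l, m)` on `[0, 1]`: quotients `p/q` of real polynomials with
`deg p ≤ l`, `deg q ≤ m` and `q > 0` on `[0, 1]`, viewed as elements of `C([0, 1], ℝ)`. -/
def RatPoly01 (l m : ℕ) : Set C(I, ℝ) :=
  {t | ∃ p q : Polynomial ℝ, p.natDegree ≤ l ∧ q.natDegree ≤ m ∧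
    (∀ x : I, 0 < q.eval (x : ℝ)) ∧
    ∀ x : I, t x = p.eval (x : ℝ) / q.eval (x : ℝ)}

open Filter Topology

theorem tendsto_of_eventually_dist_le_mul_dist {ι X : Type*} [PseudoMetricSpace X] {L : Filter ι}
    {u v : ι → X} {a : X} {C : ℝ} (hv : Tendsto v L (𝓝 a))
    (huv : ∀ᶠ i in L, dist (u i) a ≤ C * dist (v i) a) : Tendsto u L (𝓝 a) := by
  have hbound : Tendsto (fun i => C * dist (v i) a) L (𝓝 0) := by
    simpa only [mul_zero] using (tendsto_iff_dist_tendsto_zero.1 hv).const_mul C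
  exact tendsto_iff_dist_tendsto_zero.2
    (squeeze_zero' (.of_forall fun _ => dist_nonneg) huv hbound)

theorem subset_closure_biUnion_image_of_tendsto {ι X : Type*} [TopologicalSpace X]
    {L : Filter ι} [L.NeBot] {J : Set ι} (hJ : J ∈ L) {F : ι → X → X} {S : Set X}
    (hF : ∀ x ∈ S, Tendsto (fun i => F i x) L (𝓝 x)) :
    S ⊆ closure (⋃ i ∈ J, F i '' S) := by
  intro x hx
  refine mem_closure_of_tendsto (hF x hx) ?_
  filter_upwards [hJ] with i hi
  exact Set.mem_biUnion hi (Set.mem_image_of_mem (F i) hx)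

theorem infDist_le_infDist_of_subset_closure {X : Type*} [PseudoMetricSpace X] {S T : Set X}
    (hST : S ⊆ closure T) (hS : S.Nonempty) (x : X) :
    Metric.infDist x T ≤ Metric.infDist x S :=
  Metric.infDist_closure.ge.trans (Metric.infDist_le_infDist_of_subset hST hS)

theorem tendsto_of_norm_sub_le_mul_norm_sub_bernsteinApproximation {E : Type*}
    [SeminormedAddCommGroup E] [NormedSpace ℝ E] {u : ℕ → C(I, E)} {g : C(I, E)} {C : ℝ}
    (hu : ∀ᶠ n in atTop, ‖u n - g‖ ≤ C * ‖g - bernsteinApproximation n g‖) :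
    Tendsto u atTop (𝓝 g) :=
  tendsto_of_eventually_dist_le_mul_dist (bernsteinApproximation_uniform g) <| by
    simpa only [dist_eq_norm, norm_sub_rev g] using hu

theorem zero_mem_ratPoly01 (l m : ℕ) : (0 : C(I, ℝ)) ∈ RatPoly01 l m :=
  ⟨0, 1, by simp, by simp, by simp, by simp⟩

theorem stmt10_general {E : Type*} [SeminormedAddCommGroup E] [NormedSpace ℝ E] {C : ℝ}
    {F : ℕ → C(I, E) → C(I, E)} {S : Set C(I, E)} (hS : S.Nonempty)
    (hF : ∀ n, 1 ≤ n → ∀ g ∈ S, ‖F n g - g‖ ≤ C * ‖g - bernsteinApproximation n g‖)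
    (f : C(I, E)) :
    Metric.infDist f (⋃ n, ⋃ (_ : 1 ≤ n), F n '' S) ≤ Metric.infDist f S := by
  have hlim : ∀ g ∈ S, Tendsto (fun n => F n g) atTop (𝓝 g) := fun g hg =>
    tendsto_of_norm_sub_le_mul_norm_sub_bernsteinApproximation <|
      (eventually_ge_atTop 1).mono fun n hn => hF n hn g hg
  have hclosure : S ⊆ closure (⋃ n ∈ Set.Ici 1, F n '' S) :=
    subset_closure_biUnion_image_of_tendsto (Ici_mem_atTop 1) hlim
  exact infDist_le_infDist_of_subset_closure hclosure hS f

theorem stmt10 (δ : ℝ) (hδ : δ ∈ Set.Ioo (0 : ℝ) 1)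
    (F : ℕ → (C(I, ℝ) →L[ℝ] C(I, ℝ)))
    (hF : ∀ n, 1 ≤ n → ∀ g : C(I, ℝ),
      ‖F n g - g‖ ≤ δ / (1 - δ) * ‖g - bernsteinApproximation n g‖)
    (l m : ℕ) (f : C(I, ℝ)) :
    Metric.infDist f (⋃ n, ⋃ (_ : 1 ≤ n), (fun t => F n t) '' RatPoly01 l m) ≤
      Metric.infDist f (RatPoly01 l m) :=
  stmt10_general ⟨0, zero_mem_ratPoly01 l m⟩ (fun n hn g _ => hF n hn g) f
end
end

section
/- Let f ∈ C([0,1]) and δ ∈ (0,1). For each n ≥ 1 let B_n : C([0,1]) → C([0,1]) be the n-th Bernstein operator, (B_n g)(x) = Σ_{k=0}^n g(k/n)·binom(n,k)·x^k (1−x)^{n−k}, write p_n = B_n(f), and suppose g_n ∈ C([0,1]) satisfies ‖g_n − p_n‖∞ ≤ (δ/(1−δ))·‖p_n − B_n(p_n)‖∞. Then ‖g_n − f‖∞ → 0 as n → ∞. -/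
open unitInterval

noncomputable section

/-! The values of `B_n u` are convex combinations of values of `u`, so the Bernstein operators are
nonexpansive for the supremum norm. Together with `p_n = B_n f → f` this gives
`B_n p_n - B_n f → 0`, hence `B_n p_n → f`. Thus `p_n - B_n p_n → 0`, and `g_n`, whose distance to
`p_n` is at most a constant multiple of `‖p_n - B_n p_n‖`, has the same limit as `p_n`. -/

section PseudoMetricSpace

open Filter Topology
open scoped NNReal

variable {ι X Y : Type*} [PseudoMetricSpace X] [PseudoMetricSpace Y] {l : Filter ι}

theorem tendsto_apply_of_lipschitzWith {K : ℝ≥0} {T : ι → X → Y} {u : ι → X} {x : X} {y : Y}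
    (hT : ∀ i, LipschitzWith K (T i)) (hTx : Tendsto (fun i => T i x) l (𝓝 y))
    (hu : Tendsto u l (𝓝 x)) : Tendsto (fun i => T i (u i)) l (𝓝 y) := by
  have hdist : Tendsto (fun i => dist x (u i)) l (𝓝 0) := by
    simpa only [dist_self] using (tendsto_const_nhds (x := x)).dist hu
  refine hTx.congr_dist (squeeze_zero (fun _ => dist_nonneg)
    (fun i => (hT i).dist_le_mul x (u i)) ?_)
  simpa only [mul_zero] using hdist.const_mul (K : ℝ)

theorem tendsto_of_dist_le_mul_dist {a b y : ι → X} {x : X} {C : ℝ}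
    (ha : Tendsto a l (𝓝 x)) (hb : Tendsto b l (𝓝 x))
    (hy : ∀ᶠ i in l, dist (y i) (a i) ≤ C * dist (a i) (b i)) : Tendsto y l (𝓝 x) := by
  have hbound : Tendsto (fun i => C * dist (a i) (b i)) l (𝓝 0) := by
    simpa only [dist_self, mul_zero] using (ha.dist hb).const_mul C
  exact (tendsto_iff_of_dist
    (squeeze_zero' (Eventually.of_forall fun _ => dist_nonneg) hy hbound)).2 ha

end PseudoMetricSpace

section ContinuousSMul

variable {E : Type*} [AddCommGroup E] [TopologicalSpace E] [IsTopologicalAddGroup E] [Module ℝ E]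
  [ContinuousSMul ℝ E]

theorem bernsteinApproximation_sub (n : ℕ) (u v : C(I, E)) :
    bernsteinApproximation n (u - v) =
      bernsteinApproximation n u - bernsteinApproximation n v := by
  ext x
  simp only [bernsteinApproximation.apply, ContinuousMap.sub_apply, smul_sub,
    Finset.sum_sub_distrib]

theorem bernsteinApproximation_apply_mem {s : Set E} (hs : Convex ℝ s) {u : C(I, E)}
    (hu : ∀ x, u x ∈ s) (n : ℕ) (x : I) : bernsteinApproximation n u x ∈ s := by
  rw [bernsteinApproximation.apply]
  exact hs.sum_mem (fun _ _ => bernstein_nonneg) (bernstein.probability n x) fun _ _ => hu _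

end ContinuousSMul

section SeminormedAddCommGroup

variable {E : Type*} [SeminormedAddCommGroup E] [NormedSpace ℝ E]

theorem norm_bernsteinApproximation_le (n : ℕ) (u : C(I, E)) :
    ‖bernsteinApproximation n u‖ ≤ ‖u‖ := by
  refine (ContinuousMap.norm_le _ (norm_nonneg u)).2 fun x => ?_
  exact mem_closedBall_zero_iff.1 <|
    bernsteinApproximation_apply_mem (convex_closedBall 0 ‖u‖)
      (fun y => mem_closedBall_zero_iff.2 (u.norm_coe_le_norm y)) n x

theorem lipschitzWith_bernsteinApproximation (n : ℕ) :
    LipschitzWith 1 (bernsteinApproximation n : C(I, E) → C(I, E)) :=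
  LipschitzWith.mk_one fun u v => by
    simpa only [dist_eq_norm, bernsteinApproximation_sub] using
      norm_bernsteinApproximation_le n (u - v)

theorem tendsto_bernsteinApproximation_bernsteinApproximation (f : C(I, E)) :
    Filter.Tendsto (fun n => bernsteinApproximation n (bernsteinApproximation n f))
      Filter.atTop (nhds f) :=
  tendsto_apply_of_lipschitzWith lipschitzWith_bernsteinApproximation
    (bernsteinApproximation_uniform f) (bernsteinApproximation_uniform f)

theorem stmt12_general (f : C(I, E)) (C : ℝ)
    (p : ℕ → C(I, E)) (hp : ∀ n, p n = bernsteinApproximation n f)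
    (g : ℕ → C(I, E))
    (hg : ∀ᶠ n in Filter.atTop, ‖g n - p n‖ ≤ C * ‖p n - bernsteinApproximation n (p n)‖) :
    Filter.Tendsto (fun n => ‖g n - f‖) Filter.atTop (nhds 0) := by
  obtain rfl : p = fun n => bernsteinApproximation n f := funext hp
  simp only [← dist_eq_norm] at hg ⊢
  exact tendsto_iff_dist_tendsto_zero.1 <| tendsto_of_dist_le_mul_dist
    (bernsteinApproximation_uniform f)
    (tendsto_bernsteinApproximation_bernsteinApproximation f) hg

end SeminormedAddCommGroup

theorem stmt12 (f : C(I, ℝ)) (δ : ℝ) (hδ : δ ∈ Set.Ioo (0 : ℝ) 1)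
    (p : ℕ → C(I, ℝ)) (hp : ∀ n, p n = bernsteinApproximation n f)
    (g : ℕ → C(I, ℝ))
    (hg : ∀ n, 1 ≤ n →
      ‖g n - p n‖ ≤ δ / (1 - δ) * ‖p n - bernsteinApproximation n (p n)‖) :
    Filter.Tendsto (fun n => ‖g n - f‖) Filter.atTop (nhds 0) :=
  stmt12_general f (δ / (1 - δ)) p hp g (Filter.eventually_atTop.2 ⟨1, hg⟩)
end
end

section
/- Let I = [a,b] be a compact interval and δ ∈ (0,1). For each n ∈ ℕ let B_n : C(I) → C(I) be a bounded linear operator with ‖B_n‖ ≤ 1, and let F_n : C(I) → C(I) be a linear map satisfying ‖F_n(h) − h‖∞ ≤ (δ/(1−δ))·‖h − B_n(h)‖∞ for all h ∈ C(I). Define the set-valued map T : C(I) → Set(C(I)) by T(f) = {F_n(f) : n ∈ ℕ}. Then: (i) T(λ·f) = λ·T(f) (elementwise scalar multiple) for every λ > 0 and every f ∈ C(I), and T(0) = {0}, so that T is a process; and (ii) for all f, g ∈ C(I), T(g) ⊆ T(f) + {h ∈ C(I) : ‖h‖∞ ≤ ((1+δ)/(1−δ))·‖f − g‖∞} (Minkowski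 sum), so that T is Lipschitz with constant (1+δ)/(1−δ). -/
/-!
If `B` does not increase norms, then `‖h - B h‖ ≤ 2 * ‖h‖`, so a map `F` with
`‖F h - h‖ ≤ c * ‖h - B h‖` satisfies `‖F h‖ ≤ (1 + 2 * c) * ‖h‖`. For `c = δ / (1 - δ)` this
constant is `(1 + δ) / (1 - δ)`, the same for every member of the family; by additivity, `F i f`
and `F i g` differ by `F i (g - f)`, so each value at `g` is close to the value at `f` of the same
index.
-/

open scoped Pointwise

noncomputable section

section ValueSet

variable {ι Φ E G : Type*} [FunLike Φ E G]

/-- The multi-valued operator `f ↦ {F i f | i : ι}` of a family `F` of maps. For the Bernstein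
`α`-fractal operators, indexed by `ℕ`, it is the multi-valued Bernstein fractal operator. -/
def valueSet (F : ι → Φ) (f : E) : Set G :=
  Set.range fun i => F i f

theorem valueSet_smul {R : Type*} [SMul R E] [SMul R G] [MulActionHomClass Φ R E G]
    (F : ι → Φ) (c : R) (f : E) : valueSet F (c • f) = c • valueSet F f := by
  simp only [valueSet, map_smul, Set.smul_set_range]

theorem valueSet_zero [Nonempty ι] [Zero E] [Zero G] [ZeroHomClass Φ E G] (F : ι → Φ) :
    valueSet F 0 = {0} := by
  simp only [valueSet, map_zero, Set.range_const]

theorem valueSet_subset_add_of_norm_le [SeminormedAddGroup E] [SeminormedAddCommGroup G]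
    [AddMonoidHomClass Φ E G] {F : ι → Φ} {K : ℝ} (hF : ∀ i h, ‖F i h‖ ≤ K * ‖h‖) (f g : E) :
    valueSet F g ⊆ valueSet F f + {h : G | ‖h‖ ≤ K * ‖f - g‖} := by
  rintro _ ⟨i, rfl⟩
  refine Set.mem_add.mpr ⟨F i f, ⟨i, rfl⟩, F i (g - f), ?_, ?_⟩
  · simpa only [Set.mem_ofPred_eq, norm_sub_rev f g] using hF i (g - f)
  · rw [map_sub, add_sub_cancel]

end ValueSet

section NormBound

variable {E : Type*} [SeminormedAddCommGroup E] {x y z : E}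

theorem norm_le_one_add_two_mul_of_norm_sub_le {c : ℝ} (hc : 0 ≤ c) (hy : ‖y‖ ≤ ‖x‖)
    (hz : ‖z - x‖ ≤ c * ‖x - y‖) : ‖z‖ ≤ (1 + 2 * c) * ‖x‖ := by
  have hxy : ‖x - y‖ ≤ 2 * ‖x‖ := by linarith [norm_sub_le x y]
  calc
    ‖z‖ ≤ ‖x‖ + ‖z - x‖ := norm_le_norm_add_norm_sub' z x
    _ ≤ ‖x‖ + c * (2 * ‖x‖) := by grw [hz, hxy]
    _ = (1 + 2 * c) * ‖x‖ := by ring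

theorem norm_le_one_add_div_one_sub_mul_of_norm_sub_le {δ : ℝ} (hδ : δ ∈ Set.Ico (0 : ℝ) 1)
    (hy : ‖y‖ ≤ ‖x‖) (hz : ‖z - x‖ ≤ δ / (1 - δ) * ‖x - y‖) :
    ‖z‖ ≤ (1 + δ) / (1 - δ) * ‖x‖ := by
  have hδ' : 0 < 1 - δ := sub_pos.mpr hδ.2
  have hK : (1 + δ) / (1 - δ) = 1 + 2 * (δ / (1 - δ)) := by
    field_simp
    ring
  rw [hK]
  exact norm_le_one_add_two_mul_of_norm_sub_le (div_nonneg hδ.1 hδ'.le) hy hz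

end NormBound

theorem stmt14_general {ι R E : Type*} [Nonempty ι] [Semiring R] [SeminormedAddCommGroup E]
    [Module R E] {δ : ℝ} (hδ : δ ∈ Set.Ico (0 : ℝ) 1) {B : ι → E → E}
    (hB : ∀ i h, ‖B i h‖ ≤ ‖h‖) {F : ι → E →ₗ[R] E}
    (hF : ∀ i h, ‖F i h - h‖ ≤ δ / (1 - δ) * ‖h - B i h‖) :
    ((∀ (c : R) (f : E), valueSet F (c • f) = c • valueSet F f) ∧ valueSet F 0 = {0}) ∧
    (∀ f g : E,
      valueSet F g ⊆ valueSet F f + {h : E | ‖h‖ ≤ (1 + δ) / (1 - δ) * ‖f - g‖}) :=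
  ⟨⟨valueSet_smul F, valueSet_zero F⟩, valueSet_subset_add_of_norm_le fun i h =>
    norm_le_one_add_div_one_sub_mul_of_norm_sub_le hδ (hB i h) (hF i h)⟩

theorem stmt14 (a b : ℝ) (hab : a ≤ b) (δ : ℝ) (hδ : δ ∈ Set.Ioo (0 : ℝ) 1)
    (B : ℕ → (C(Set.Icc a b, ℝ) →L[ℝ] C(Set.Icc a b, ℝ))) (hB : ∀ n, ‖B n‖ ≤ 1)
    (F : ℕ → (C(Set.Icc a b, ℝ) →ₗ[ℝ] C(Set.Icc a b, ℝ)))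
    (hF : ∀ n, ∀ h : C(Set.Icc a b, ℝ), ‖F n h - h‖ ≤ δ / (1 - δ) * ‖h - B n h‖)
    (T : C(Set.Icc a b, ℝ) → Set C(Set.Icc a b, ℝ))
    (hT : ∀ f, T f = Set.range fun n => F n f) :
    ((∀ lam : ℝ, 0 < lam → ∀ f, T (lam • f) = lam • T f) ∧ T 0 = {0}) ∧
    (∀ f g : C(Set.Icc a b, ℝ),
      T g ⊆ T f + {h : C(Set.Icc a b, ℝ) | ‖h‖ ≤ (1 + δ) / (1 - δ) * ‖f - g‖}) := by
  obtain rfl : T = valueSet F := funext hT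
  have hB' : ∀ n h, ‖B n h‖ ≤ ‖h‖ := fun n h => by simpa using (B n).le_of_opNorm_le (hB n) h
  have h := stmt14_general (Set.Ioo_subset_Ico_self hδ) hB' hF
  exact ⟨⟨fun lam _ => h.1.1 lam, h.1.2⟩, h.2⟩
end
end

section
/- Let I = [a,b] be a compact interval with a < b, let δ ∈ (0,1), let L : C(I) → C(I) be a bounded linear operator with ‖L‖ ≤ 1, and let F : C(I) → C(I) be a bounded linear operator satisfying ‖g − F(g)‖∞ ≤ δ·‖F(g) − L(g)‖∞ for all g ∈ C(I). Then F is bounded below with ((1−δ)/(1+δ))·‖g‖∞ ≤ ‖F(g)‖∞ for all g ∈ C(I), and F is not a compact operator. -/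
/-!
Since `g = (g - F g) + F g` and `‖g - F g‖ ≤ δ (‖F g‖ + ‖g‖)`, one gets
`(1 - δ) ‖g‖ ≤ (1 + δ) ‖F g‖`. A linear map that is bounded below pulls totally bounded sets back
to totally bounded sets, so if it were also compact, its domain would have a totally bounded
neighbourhood of `0` and hence be finite-dimensional by Riesz. But `C([a, b], ℝ)` contains a copy
of `ℝ[X]`.
-/

noncomputable section

lemma one_sub_div_one_add_mul_norm_le {E : Type*} [SeminormedAddGroup E] {δ : ℝ} (hδ : 0 ≤ δ)
    {x y z : E} (hz : ‖z‖ ≤ ‖x‖) (hxy : ‖x - y‖ ≤ δ * ‖y - z‖) :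
    (1 - δ) / (1 + δ) * ‖x‖ ≤ ‖y‖ := by
  have hx : ‖x‖ ≤ ‖y‖ + δ * (‖y‖ + ‖x‖) := calc
    ‖x‖ ≤ ‖x - y‖ + ‖y‖ := by simpa only [sub_add_cancel] using norm_add_le (x - y) y
    _ ≤ δ * ‖y - z‖ + ‖y‖ := by gcongr
    _ ≤ δ * (‖y‖ + ‖z‖) + ‖y‖ := by gcongr; exact norm_sub_le y z
    _ ≤ δ * (‖y‖ + ‖x‖) + ‖y‖ := by gcongr
    _ = ‖y‖ + δ * (‖y‖ + ‖x‖) := add_comm _ _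
  rw [div_mul_eq_mul_div, div_le_iff₀ (by positivity)]
  linarith

lemma totallyBounded_preimage_of_antilipschitzWith {X Y : Type*} [PseudoEMetricSpace X]
    [PseudoEMetricSpace Y] {K : NNReal} {f : X → Y} (hf : AntilipschitzWith K f) {s : Set Y}
    (hs : TotallyBounded s) : TotallyBounded (f ⁻¹' s) := by
  rw [totallyBounded_iff_ultrafilter] at hs ⊢
  intro u hu
  have hmap : Cauchy (Filter.map f u) :=
    hs (u.map f) (Filter.map_le_iff_le_comap.2 (hu.trans_eq Filter.comap_principal.symm))
  have hle : (u : Filter X) ≤ Filter.comap f (Filter.map f u) := Filter.le_comap_map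
  exact (hmap.comap' hf.comap_uniformity_le (u.neBot.mono hle)).mono hle

lemma finiteDimensional_of_isCompactOperator_of_antilipschitzWith (𝕜 : Type*)
    [NontriviallyNormedField 𝕜] [CompleteSpace 𝕜] {E Y : Type*} [NormedAddCommGroup E]
    [NormedSpace 𝕜 E] [PseudoEMetricSpace Y] {K : NNReal} {f : E → Y}
    (hf : AntilipschitzWith K f) (hcpt : IsCompactOperator f) : FiniteDimensional 𝕜 E := by
  obtain ⟨S, hS, hS0⟩ := hcpt
  exact .of_totallyBounded_nhds_zero 𝕜 hS0
    (totallyBounded_preimage_of_antilipschitzWith hf hS.totallyBounded)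

section PolynomialFunctions

variable {R : Type*} [CommRing R] [IsDomain R] [TopologicalSpace R] [IsTopologicalSemiring R]
  {s : Set R}

lemma toContinuousMapOnAlgHom_injective_of_infinite (hs : s.Infinite) :
    Function.Injective (Polynomial.toContinuousMapOnAlgHom s) := fun p q hpq ↦
  Polynomial.eq_of_infinite_eval_eq p q <|
    hs.mono fun x hx ↦ DFunLike.congr_fun hpq (⟨x, hx⟩ : s)

lemma not_moduleFinite_continuousMap_of_infinite (hs : s.Infinite) : ¬ Module.Finite R C(s, R) := by
  intro _
  have hind : LinearIndependent R fun n : ℕ ↦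
      (Polynomial.toContinuousMapOnAlgHom s).toLinearMap (Polynomial.basisMonomials R n) :=
    (Polynomial.basisMonomials R).linearIndependent.map_injOn _
      (toContinuousMapOnAlgHom_injective_of_infinite hs).injOn
  exact Module.Finite.not_linearIndependent_of_infinite _ hind

end PolynomialFunctions

theorem stmt15_general {𝕜 E : Type*} [NontriviallyNormedField 𝕜] [CompleteSpace 𝕜]
    [NormedAddCommGroup E] [NormedSpace 𝕜 E] (hE : ¬ FiniteDimensional 𝕜 E) {δ : ℝ}
    (hδ : δ ∈ Set.Ico (0 : ℝ) 1) {L : E → E} (hL : ∀ g, ‖L g‖ ≤ ‖g‖) {F : E →ₗ[𝕜] E}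
    (hF : ∀ g, ‖g - F g‖ ≤ δ * ‖F g - L g‖) :
    (∀ g, (1 - δ) / (1 + δ) * ‖g‖ ≤ ‖F g‖) ∧ ¬ IsCompactOperator F := by
  obtain ⟨h0, h1⟩ := hδ
  have hbelow (g : E) : (1 - δ) / (1 + δ) * ‖g‖ ≤ ‖F g‖ :=
    one_sub_div_one_add_mul_norm_le h0 (hL g) (hF g)
  have hpos : 0 < (1 - δ) / (1 + δ) := div_pos (by linarith) (by linarith)
  obtain ⟨K, hK⟩ := antilipschitzWith_iff_exists_mul_le_norm.2 ⟨_, hpos, hbelow⟩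
  exact ⟨hbelow, fun hcpt ↦
    hE (finiteDimensional_of_isCompactOperator_of_antilipschitzWith 𝕜 hK hcpt)⟩

theorem stmt15 (a b : ℝ) (hab : a < b) (δ : ℝ) (hδ : δ ∈ Set.Ioo (0 : ℝ) 1)
    (L : C(Set.Icc a b, ℝ) →L[ℝ] C(Set.Icc a b, ℝ)) (hL : ‖L‖ ≤ 1)
    (F : C(Set.Icc a b, ℝ) →L[ℝ] C(Set.Icc a b, ℝ))
    (hF : ∀ g : C(Set.Icc a b, ℝ), ‖g - F g‖ ≤ δ * ‖F g - L g‖) :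
    (∀ g : C(Set.Icc a b, ℝ), (1 - δ) / (1 + δ) * ‖g‖ ≤ ‖F g‖) ∧
    ¬ IsCompactOperator (⇑F) :=
  stmt15_general (F := F.toLinearMap)
    (not_moduleFinite_continuousMap_of_infinite (Set.Icc_infinite hab))
    (Set.Ioo_subset_Ico_self hδ) (fun g ↦ by simpa only [one_mul] using L.le_of_opNorm_le hL g) hF
end
end
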